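/- arXiv:1712.10327 — 4 statements merged into one kernel-verified Lean document; each statement's English description precedes it below -/
import Mathlib

section
/- Let Ω be an open convex set of ℝⁿ, let a, b : Ω → ℝ be C² functions with a > 0 and b > 0 on Ω, and let α, β > 0 be such that a^α is concave on Ω and b^β is concave on Ω. Then (ab)^γ is concave on Ω, where γ = αβ/(α+β) (i.e. 1/γ = 1/α + 1/β). -/
/-!
Writing `p = β / (α + β)` and `q = α / (α + β)`, one has `p + q = 1` and
`(a * b) ^ γ = (a ^ α) ^ p * (b ^ β) ^ q`, so the claim is that a weighted geometric mean of two
nonnegative concave functions is concave. The map `(x, y) ↦ x ^ p * y ^ q` on the closed quadrant is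
superadditive, which is Hölder's inequality for sums of two terms, and homogeneous of degree one;
hence it is concave. It is also monotone in each variable, so precomposing it with a pair of concave
functions preserves concavity.
-/

open Set

section GeometricMean

variable {p q : ℝ}

theorem rpow_mul_rpow_add_le (hp : 0 ≤ p) (hq : 0 ≤ q) (hpq : p + q = 1) {x y u v : ℝ}
    (hx : 0 ≤ x) (hy : 0 ≤ y) (hu : 0 ≤ u) (hv : 0 ≤ v) :
    x ^ p * y ^ q + u ^ p * v ^ q ≤ (x + u) ^ p * (y + v) ^ q := by
  rcases hp.eq_or_lt with rfl | hp_pos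
  · obtain rfl : q = 1 := by linarith
    simp
  rcases hq.eq_or_lt with rfl | hq_pos
  · obtain rfl : p = 1 := by linarith
    simp
  have hconj : p⁻¹.HolderConjugate q⁻¹ :=
    ⟨by simpa only [inv_inv, inv_one] using hpq, inv_pos.2 hp_pos, inv_pos.2 hq_pos⟩
  have holder := Real.inner_le_Lp_mul_Lq_of_nonneg Finset.univ hconj
    (f := ![x ^ p, u ^ p]) (g := ![y ^ q, v ^ q])
    (by simp [Fin.forall_fin_two, Real.rpow_nonneg, hx, hu])
    (by simp [Fin.forall_fin_two, Real.rpow_nonneg, hy, hv])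
  simpa [Fin.sum_univ_two, Real.rpow_rpow_inv, hx, hy, hu, hv, hp_pos.ne', hq_pos.ne'] using holder

theorem mul_rpow_mul_mul_rpow (hpq : p + q = 1) {c x y : ℝ} (hc : 0 ≤ c) (hx : 0 ≤ x)
    (hy : 0 ≤ y) : (c * x) ^ p * (c * y) ^ q = c * (x ^ p * y ^ q) := by
  have hc_rpow : c ^ p * c ^ q = c := by
    rw [← Real.rpow_add' hc (hpq ▸ one_ne_zero), hpq, Real.rpow_one]
  rw [Real.mul_rpow hc hx, Real.mul_rpow hc hy, mul_mul_mul_comm, hc_rpow]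

theorem concaveOn_rpow_mul_rpow (hp : 0 ≤ p) (hq : 0 ≤ q) (hpq : p + q = 1) :
    ConcaveOn ℝ (Ici 0 ×ˢ Ici 0) fun z : ℝ × ℝ ↦ z.1 ^ p * z.2 ^ q := by
  refine ⟨(convex_Ici 0).prod (convex_Ici 0), ?_⟩
  rintro ⟨x, y⟩ ⟨hx, hy⟩ ⟨u, v⟩ ⟨hu, hv⟩ s t hs ht -
  simp only [mem_Ici] at hx hy hu hv
  calc s * (x ^ p * y ^ q) + t * (u ^ p * v ^ q)
      = (s * x) ^ p * (s * y) ^ q + (t * u) ^ p * (t * v) ^ q := by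
        rw [mul_rpow_mul_mul_rpow hpq hs hx hy, mul_rpow_mul_mul_rpow hpq ht hu hv]
    _ ≤ (s * x + t * u) ^ p * (s * y + t * v) ^ q :=
        rpow_mul_rpow_add_le hp hq hpq (mul_nonneg hs hx) (mul_nonneg hs hy)
          (mul_nonneg ht hu) (mul_nonneg ht hv)

variable {E : Type*} [AddCommMonoid E] [SMul ℝ E] {s : Set E} {f g : E → ℝ}

theorem concaveOn_rpow_mul_rpow_of_concaveOn (hp : 0 ≤ p) (hq : 0 ≤ q) (hpq : p + q = 1)
    (hf : ConcaveOn ℝ s f) (hg : ConcaveOn ℝ s g)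
    (hf_nonneg : ∀ x ∈ s, 0 ≤ f x) (hg_nonneg : ∀ x ∈ s, 0 ≤ g x) :
    ConcaveOn ℝ s fun x ↦ f x ^ p * g x ^ q := by
  refine ⟨hf.1, fun x hx y hy c d hc hd hcd ↦ ?_⟩
  have hfx := hf_nonneg x hx
  have hfy := hf_nonneg y hy
  have hgx := hg_nonneg x hx
  have hgy := hg_nonneg y hy
  have hf_le := hf.2 hx hy hc hd hcd
  have hg_le := hg.2 hx hy hc hd hcd
  have hf_comb : 0 ≤ f (c • x + d • y) := hf_nonneg _ (hf.1 hx hy hc hd hcd)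
  calc c • (f x ^ p * g x ^ q) + d • (f y ^ p * g y ^ q)
      ≤ (c • f x + d • f y) ^ p * (c • g x + d • g y) ^ q :=
        (concaveOn_rpow_mul_rpow hp hq hpq).2 (x := (f x, g x)) ⟨hfx, hgx⟩
          (y := (f y, g y)) ⟨hfy, hgy⟩ hc hd hcd
    _ ≤ f (c • x + d • y) ^ p * g (c • x + d • y) ^ q := by
        gcongr

end GeometricMean

theorem mul_rpow_mul_div_add {x y : ℝ} (hx : 0 ≤ x) (hy : 0 ≤ y) (α β : ℝ) :
    (x * y) ^ (α * β / (α + β)) = (x ^ α) ^ (β / (α + β)) * (y ^ β) ^ (α / (α + β)) := by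
  rw [Real.mul_rpow hx hy, ← Real.rpow_mul hx, ← Real.rpow_mul hy, mul_div_assoc', mul_div_assoc',
    mul_comm β α]

theorem stmt1_general {E : Type*} [AddCommMonoid E] [SMul ℝ E] {Ω : Set E} {a b : E → ℝ}
    (ha : ∀ x ∈ Ω, 0 ≤ a x) (hb : ∀ x ∈ Ω, 0 ≤ b x) {α β : ℝ} (hα : 0 < α) (hβ : 0 < β)
    (haconc : ConcaveOn ℝ Ω fun x ↦ a x ^ α) (hbconc : ConcaveOn ℝ Ω fun x ↦ b x ^ β) :
    ConcaveOn ℝ Ω fun x ↦ (a x * b x) ^ (α * β / (α + β)) := by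
  have hweights : β / (α + β) + α / (α + β) = 1 := by field_simp; ring
  have hmean : ConcaveOn ℝ Ω fun x ↦ (a x ^ α) ^ (β / (α + β)) * (b x ^ β) ^ (α / (α + β)) :=
    concaveOn_rpow_mul_rpow_of_concaveOn (by positivity) (by positivity) hweights haconc hbconc
      (fun x hx ↦ Real.rpow_nonneg (ha x hx) α) (fun x hx ↦ Real.rpow_nonneg (hb x hx) β)
  exact hmean.congr fun x hx ↦ (mul_rpow_mul_div_add (ha x hx) (hb x hx) α β).symm

theorem stmt1 {n : ℕ} (Ω : Set (Fin n → ℝ)) (hΩopen : IsOpen Ω) (hΩconv : Convex ℝ Ω)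
    (a b : (Fin n → ℝ) → ℝ)
    (ha : ContDiffOn ℝ 2 a Ω) (hb : ContDiffOn ℝ 2 b Ω)
    (hapos : ∀ x ∈ Ω, 0 < a x) (hbpos : ∀ x ∈ Ω, 0 < b x)
    (α β : ℝ) (hα : 0 < α) (hβ : 0 < β)
    (haconc : ConcaveOn ℝ Ω (fun x => a x ^ α))
    (hbconc : ConcaveOn ℝ Ω (fun x => b x ^ β)) :
    ConcaveOn ℝ Ω (fun x => (a x * b x) ^ (α * β / (α + β))) :=
  stmt1_general (fun x hx ↦ (hapos x hx).le) (fun x hx ↦ (hbpos x hx).le) hα hβ haconc hbconc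
end

section
/- Let n ≥ 1, let l and k be integers with 1 ≤ l ≤ n and 0 ≤ k ≤ n - l, and let σ_j denote the j-th elementary symmetric polynomial in n real variables. Then the function x ↦ σ_{k+l}(x)/σ_k(x) is (1/l)-concave on the positive orthant (0, ∞)ⁿ, i.e. (σ_{k+l}/σ_k)^{1/l} is concave on (0, ∞)ⁿ. -/
/-- The `k`-th elementary symmetric polynomial in `n` real variables. -/
noncomputable def esymm (n k : ℕ) (x : Fin n → ℝ) : ℝ :=
  ∑ s ∈ Finset.powersetCard k (Finset.univ : Finset (Fin n)), ∏ i ∈ s, x i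

/-!
The ratios `r_k = σ_{k+1} / σ_k` are superadditive on the positive orthant. Indeed `r_0` is linear,
and writing `r_k^i` for the ratio in the variables other than `x_i`, the identities
`(k + 2) σ_{k+2} = ∑ i, x_i σ_{k+1}^i` and `σ_{k+1} = σ_{k+1}^i + x_i σ_k^i` give
`(k + 2) r_{k+1} = ∑ i, x_i r_k^i / (x_i + r_k^i)`, where `(a, b) ↦ a b / (a + b)` is superadditive
and increasing in `b`. Now `(σ_{k+l} / σ_k)^{1/l}` is the geometric mean of `r_k, …, r_{k+l-1}`.
Geometric means are increasing and superadditive, so this function is superadditive; being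
positively homogeneous of degree one, it is concave.
-/

open Finset

section Concavity

variable {𝕜 E β : Type*} [Semiring 𝕜] [PartialOrder 𝕜] [AddCommMonoid E] [Module 𝕜 E]
  [AddCommMonoid β] [PartialOrder β] [Module 𝕜 β]

lemma concaveOn_of_map_smul_of_add_le_map_add (C : ConvexCone 𝕜 E) {f : E → β}
    (map_smul : ∀ c : 𝕜, 0 < c → ∀ x ∈ C, f (c • x) = c • f x)
    (add_le_map_add : ∀ x ∈ C, ∀ y ∈ C, f x + f y ≤ f (x + y)) :
    ConcaveOn 𝕜 (C : Set E) f := by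
  refine concaveOn_iff_forall_pos.2 ⟨C.convex, fun x hx y hy a b ha hb _ ↦ ?_⟩
  rw [← map_smul a ha x hx, ← map_smul b hb y hy]
  exact add_le_map_add _ (C.smul_mem ha hx) _ (C.smul_mem hb hy)

/-- The vectors whose coordinates indexed by `s` are positive, as a convex cone; the other
coordinates are unconstrained. -/
def positiveOrthant {ι : Type*} (s : Finset ι) : ConvexCone ℝ (ι → ℝ) where
  carrier := {x | ∀ i ∈ s, 0 < x i}
  smul_mem' _ hc _ hx i hi := mul_pos hc (hx i hi)
  add_mem' _ hx _ hy i hi := add_pos (hx i hi) (hy i hi)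

end Concavity

section GeometricMean

variable {ι : Type*} {s : Finset ι} {w a b : ι → ℝ}

lemma prod_rpow_le_sum_mul_div_mul_prod_rpow (hw : ∀ i ∈ s, 0 ≤ w i) (hw' : ∑ i ∈ s, w i = 1)
    (ha : ∀ i ∈ s, 0 ≤ a i) (hb : ∀ i ∈ s, 0 ≤ b i) (hab : ∀ i ∈ s, b i = 0 → a i = 0) :
    ∏ i ∈ s, a i ^ w i ≤ (∑ i ∈ s, w i * (a i / b i)) * ∏ i ∈ s, b i ^ w i := by
  have ratio_nonneg : ∀ i ∈ s, 0 ≤ a i / b i := fun i hi ↦ div_nonneg (ha i hi) (hb i hi)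
  calc ∏ i ∈ s, a i ^ w i
      = (∏ i ∈ s, (a i / b i) ^ w i) * ∏ i ∈ s, b i ^ w i := by
        rw [← prod_mul_distrib]
        refine prod_congr rfl fun i hi ↦ ?_
        rw [← Real.mul_rpow (ratio_nonneg i hi) (hb i hi), div_mul_cancel_of_imp (hab i hi)]
    _ ≤ (∑ i ∈ s, w i * (a i / b i)) * ∏ i ∈ s, b i ^ w i :=
        mul_le_mul_of_nonneg_right
          (Real.geom_mean_le_arith_mean_weighted s w _ hw hw' ratio_nonneg)
          (prod_nonneg fun i hi ↦ Real.rpow_nonneg (hb i hi) _)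

lemma prod_rpow_add_prod_rpow_le (hw : ∀ i ∈ s, 0 ≤ w i) (hw' : ∑ i ∈ s, w i = 1)
    (ha : ∀ i ∈ s, 0 ≤ a i) (hb : ∀ i ∈ s, 0 ≤ b i) :
    ∏ i ∈ s, a i ^ w i + ∏ i ∈ s, b i ^ w i ≤ ∏ i ∈ s, (a i + b i) ^ w i := by
  have hab : ∀ i ∈ s, 0 ≤ a i + b i := fun i hi ↦ add_nonneg (ha i hi) (hb i hi)
  have sum_le_one :
      ∑ i ∈ s, w i * (a i / (a i + b i)) + ∑ i ∈ s, w i * (b i / (a i + b i)) ≤ 1 := by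
    rw [← sum_add_distrib, ← hw']
    refine sum_le_sum fun i hi ↦ ?_
    rw [← mul_add, ← add_div]
    exact mul_le_of_le_one_right (hw i hi) (div_self_le_one _)
  calc ∏ i ∈ s, a i ^ w i + ∏ i ∈ s, b i ^ w i
      ≤ (∑ i ∈ s, w i * (a i / (a i + b i))) * ∏ i ∈ s, (a i + b i) ^ w i +
          (∑ i ∈ s, w i * (b i / (a i + b i))) * ∏ i ∈ s, (a i + b i) ^ w i :=
        add_le_add
          (prod_rpow_le_sum_mul_div_mul_prod_rpow hw hw' ha hab fun i hi h ↦
            ((add_eq_zero_iff_of_nonneg (ha i hi) (hb i hi)).1 h).1)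
          (prod_rpow_le_sum_mul_div_mul_prod_rpow hw hw' hb hab fun i hi h ↦
            ((add_eq_zero_iff_of_nonneg (ha i hi) (hb i hi)).1 h).2)
    _ ≤ ∏ i ∈ s, (a i + b i) ^ w i := by
        rw [← add_mul]
        exact mul_le_of_le_one_left (prod_nonneg fun i hi ↦ Real.rpow_nonneg (hab i hi) _)
          sum_le_one

end GeometricMean

section ParallelSum

variable {K : Type*} [Field K]

/-- The parallel sum `(a⁻¹ + b⁻¹)⁻¹` of two positive elements: the function through which the
ratios of consecutive elementary symmetric polynomials satisfy a recursion. -/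
def parallelSum (a b : K) : K := a * b / (a + b)

variable [LinearOrder K] [IsStrictOrderedRing K] {a b c d : K}

lemma parallelSum_le_parallelSum_left (ha : 0 < a) (hb : 0 ≤ b) (hbc : b ≤ c) :
    parallelSum a b ≤ parallelSum a c := by
  have hc : 0 ≤ c := hb.trans hbc
  unfold parallelSum
  rw [div_le_div_iff₀ (by positivity) (by positivity)]
  linear_combination a ^ 2 * hbc

lemma parallelSum_add_parallelSum_le (ha : 0 < a) (hb : 0 < b) (hc : 0 < c) (hd : 0 < d) :
    parallelSum a b + parallelSum c d ≤ parallelSum (a + c) (b + d) := by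
  unfold parallelSum
  rw [div_add_div _ _ (by positivity) (by positivity),
    div_le_div_iff₀ (by positivity) (by positivity)]
  linear_combination sq_nonneg (a * d - b * c)

end ParallelSum

section ElementarySymmetric

variable {ι R : Type*} [CommSemiring R]

lemma multiset_esymm_cons (a : R) (m : Multiset R) (k : ℕ) :
    (a ::ₘ m).esymm (k + 1) = m.esymm (k + 1) + a * m.esymm k := by
  simp [Multiset.esymm, Multiset.powersetCard_cons, Multiset.sum_map_mul_left]

/-- The `k`-th elementary symmetric polynomial in the variables `x i`, `i ∈ s`. The set `s` is
explicit so that variables can be removed. -/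
def esymmOn (s : Finset ι) (k : ℕ) (x : ι → R) : R := (s.val.map x).esymm k

lemma esymm_eq_esymmOn_univ (n k : ℕ) (x : Fin n → ℝ) : esymm n k x = esymmOn univ k x :=
  (Finset.esymm_map_val x univ k).symm

lemma esymmOn_zero (s : Finset ι) (x : ι → R) : esymmOn s 0 x = 1 := by
  simp [esymmOn, Finset.esymm_map_val]

lemma esymmOn_one (s : Finset ι) (x : ι → R) : esymmOn s 1 x = ∑ i ∈ s, x i := by
  simp [esymmOn, Finset.esymm_map_val, powersetCard_one]

lemma esymmOn_smul (s : Finset ι) (k : ℕ) (c : R) (x : ι → R) :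
    esymmOn s k (c • x) = c ^ k * esymmOn s k x := by
  rw [← smul_eq_mul, esymmOn, esymmOn, Multiset.pow_smul_esymm, Multiset.map_map]
  rfl

lemma esymmOn_pos [PartialOrder R] [IsStrictOrderedRing R] {s : Finset ι} {k : ℕ} {x : ι → R}
    (hk : k ≤ #s) (hx : ∀ i ∈ s, 0 < x i) : 0 < esymmOn s k x := by
  rw [esymmOn, Finset.esymm_map_val]
  exact sum_pos (fun t ht ↦ prod_pos fun i hi ↦ hx i ((mem_powersetCard.1 ht).1 hi))
    (powersetCard_nonempty.2 hk)

variable [DecidableEq ι] {s : Finset ι} {i : ι}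

lemma esymmOn_insert (hi : i ∉ s) (k : ℕ) (x : ι → R) :
    esymmOn (insert i s) (k + 1) x = esymmOn s (k + 1) x + x i * esymmOn s k x := by
  rw [esymmOn, insert_val_of_notMem hi, Multiset.map_cons, multiset_esymm_cons]
  rfl

lemma esymmOn_succ_eq_erase (hi : i ∈ s) (k : ℕ) (x : ι → R) :
    esymmOn s (k + 1) x = esymmOn (s.erase i) (k + 1) x + x i * esymmOn (s.erase i) k x := by
  rw [← esymmOn_insert (notMem_erase i s), insert_erase hi]

-- Euler's identity for homogeneous polynomials: `σ_k` without `x i` is `∂σ_{k+1} / ∂x_i`.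
lemma sum_mul_esymmOn_erase (s : Finset ι) (k : ℕ) (x : ι → R) :
    ∑ i ∈ s, x i * esymmOn (s.erase i) k x = (k + 1) * esymmOn s (k + 1) x := by
  induction s using Finset.induction_on generalizing k with
  | empty => simp [esymmOn, Multiset.esymm, Multiset.powersetCard_zero_right]
  | insert a s ha ih =>
    rw [sum_insert ha, erase_insert ha, esymmOn_insert ha]
    cases k with
    | zero => simp [esymmOn_zero, esymmOn_one, add_comm]
    | succ k =>
      have erase_term (i : ι) (hi : i ∈ s) : x i * esymmOn ((insert a s).erase i) (k + 1) x =
          x i * esymmOn (s.erase i) (k + 1) x + x a * (x i * esymmOn (s.erase i) k x) := by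
        rw [erase_insert_of_ne (ne_of_mem_of_not_mem hi ha).symm,
          esymmOn_insert fun h ↦ ha (mem_of_mem_erase h)]
        ring
      rw [sum_congr rfl erase_term, sum_add_distrib, ← mul_sum, ih, ih]
      push_cast
      ring

end ElementarySymmetric

section Ratio

variable {ι K : Type*} [Field K]

lemma esymmOn_div_esymmOn_smul {c : K} (hc : c ≠ 0) (s : Finset ι) (k l : ℕ) (x : ι → K) :
    esymmOn s (k + l) (c • x) / esymmOn s k (c • x) =
      c ^ l * (esymmOn s (k + l) x / esymmOn s k x) := by
  rw [esymmOn_smul, esymmOn_smul, pow_add, mul_assoc, mul_div_mul_left _ _ (pow_ne_zero k hc),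
    mul_div_assoc]

/-- The ratio `σ_{k+1} / σ_k` of consecutive elementary symmetric polynomials in the variables
`x i`, `i ∈ s`. It is meaningful only where `σ_k` does not vanish. -/
def esymmRatio (s : Finset ι) (k : ℕ) (x : ι → K) : K := esymmOn s (k + 1) x / esymmOn s k x

lemma esymmRatio_zero (s : Finset ι) (x : ι → K) : esymmRatio s 0 x = ∑ i ∈ s, x i := by
  rw [esymmRatio, esymmOn_zero, esymmOn_one, div_one]

variable [LinearOrder K] [IsStrictOrderedRing K] {s : Finset ι} {k l : ℕ} {x y : ι → K}

lemma esymmRatio_pos (hk : k < #s) (hx : ∀ i ∈ s, 0 < x i) : 0 < esymmRatio s k x :=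
  div_pos (esymmOn_pos hk hx) (esymmOn_pos hk.le hx)

lemma prod_range_esymmRatio (hkl : k + l ≤ #s) (hx : ∀ i ∈ s, 0 < x i) :
    ∏ j ∈ range l, esymmRatio s (k + j) x = esymmOn s (k + l) x / esymmOn s k x := by
  induction l with
  | zero => rw [prod_range_zero, add_zero, div_self (esymmOn_pos (k := k) hkl hx).ne']
  | succ l ih =>
    have hl : k + l ≤ #s := by lia
    rw [prod_range_succ, ih hl, esymmRatio, ← add_assoc, mul_comm,
      div_mul_div_cancel₀ (esymmOn_pos hl hx).ne']

section Recursion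

variable [DecidableEq ι]

lemma parallelSum_esymmRatio_erase {i : ι} (hi : i ∈ s) (hk : k + 1 < #s)
    (hx : ∀ i ∈ s, 0 < x i) :
    parallelSum (x i) (esymmRatio (s.erase i) k x) =
      x i * esymmOn (s.erase i) (k + 1) x / esymmOn s (k + 1) x := by
  have card_erase : #(s.erase i) = #s - 1 := card_erase_of_mem hi
  have hx_erase : ∀ j ∈ s.erase i, 0 < x j := fun j hj ↦ hx j (mem_of_mem_erase hj)
  have pos_k : 0 < esymmOn (s.erase i) k x := esymmOn_pos (by lia) hx_erase
  have pos_succ : 0 < esymmOn (s.erase i) (k + 1) x := esymmOn_pos (by lia) hx_erase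
  have pos_i : 0 < x i := hx i hi
  rw [esymmOn_succ_eq_erase hi, parallelSum, esymmRatio]
  field_simp
  ring

lemma esymmRatio_succ (hk : k + 1 < #s) (hx : ∀ i ∈ s, 0 < x i) :
    esymmRatio s (k + 1) x =
      (k + 2 : K)⁻¹ * ∑ i ∈ s, parallelSum (x i) (esymmRatio (s.erase i) k x) := by
  have hk2 : (k + 2 : K) ≠ 0 := by positivity
  rw [eq_inv_mul_iff_mul_eq₀ hk2,
    sum_congr rfl fun i hi ↦ parallelSum_esymmRatio_erase hi hk hx, ← sum_div,
    sum_mul_esymmOn_erase, esymmRatio, ← mul_div_assoc]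
  push_cast
  ring

end Recursion

lemma esymmRatio_add_le (hk : k < #s) (hx : ∀ i ∈ s, 0 < x i) (hy : ∀ i ∈ s, 0 < y i) :
    esymmRatio s k x + esymmRatio s k y ≤ esymmRatio s k (x + y) := by
  classical
  induction k generalizing s with
  | zero => simp [esymmRatio_zero, sum_add_distrib]
  | succ k ih =>
    have hxy : ∀ i ∈ s, 0 < (x + y) i := fun i hi ↦ add_pos (hx i hi) (hy i hi)
    rw [esymmRatio_succ hk hx, esymmRatio_succ hk hy, esymmRatio_succ hk hxy, ← mul_add,
      ← sum_add_distrib]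
    refine mul_le_mul_of_nonneg_left (sum_le_sum fun i hi ↦ ?_) (by positivity)
    have hk_erase : k < #(s.erase i) := by rw [card_erase_of_mem hi]; lia
    have hx_erase : ∀ j ∈ s.erase i, 0 < x j := fun j hj ↦ hx j (mem_of_mem_erase hj)
    have hy_erase : ∀ j ∈ s.erase i, 0 < y j := fun j hj ↦ hy j (mem_of_mem_erase hj)
    have rx_pos := esymmRatio_pos hk_erase hx_erase
    have ry_pos := esymmRatio_pos hk_erase hy_erase
    calc parallelSum (x i) (esymmRatio (s.erase i) k x) +
          parallelSum (y i) (esymmRatio (s.erase i) k y)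
        ≤ parallelSum (x i + y i) (esymmRatio (s.erase i) k x + esymmRatio (s.erase i) k y) :=
          parallelSum_add_parallelSum_le (hx i hi) rx_pos (hy i hi) ry_pos
      _ ≤ parallelSum (x i + y i) (esymmRatio (s.erase i) k (x + y)) :=
          parallelSum_le_parallelSum_left (hxy i hi) (add_pos rx_pos ry_pos).le
            (ih hk_erase hx_erase hy_erase)

end Ratio

section RootRatio

variable {ι : Type*} {s : Finset ι} {k l : ℕ} {x y : ι → ℝ}

lemma esymmOn_div_esymmOn_rpow_smul {c : ℝ} (hc : 0 < c) (hl : l ≠ 0) (hkl : k + l ≤ #s)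
    (hx : ∀ i ∈ s, 0 < x i) :
    (esymmOn s (k + l) (c • x) / esymmOn s k (c • x)) ^ (l : ℝ)⁻¹ =
      c * (esymmOn s (k + l) x / esymmOn s k x) ^ (l : ℝ)⁻¹ := by
  have ratio_pos : 0 < esymmOn s (k + l) x / esymmOn s k x :=
    div_pos (esymmOn_pos hkl hx) (esymmOn_pos (by lia) hx)
  rw [esymmOn_div_esymmOn_smul hc.ne', Real.mul_rpow (pow_nonneg hc.le l) ratio_pos.le,
    Real.pow_rpow_inv_natCast hc.le hl]

lemma esymmOn_div_esymmOn_rpow_eq_prod (hkl : k + l ≤ #s) (hx : ∀ i ∈ s, 0 < x i) :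
    (esymmOn s (k + l) x / esymmOn s k x) ^ (l : ℝ)⁻¹ =
      ∏ j ∈ range l, esymmRatio s (k + j) x ^ (l : ℝ)⁻¹ := by
  rw [← prod_range_esymmRatio hkl hx, Real.finsetProd_rpow]
  exact fun j hj ↦ (esymmRatio_pos (by have := mem_range.1 hj; lia) hx).le

lemma esymmOn_div_esymmOn_rpow_add_le (hl : l ≠ 0) (hkl : k + l ≤ #s)
    (hx : ∀ i ∈ s, 0 < x i) (hy : ∀ i ∈ s, 0 < y i) :
    (esymmOn s (k + l) x / esymmOn s k x) ^ (l : ℝ)⁻¹ +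
        (esymmOn s (k + l) y / esymmOn s k y) ^ (l : ℝ)⁻¹ ≤
      (esymmOn s (k + l) (x + y) / esymmOn s k (x + y)) ^ (l : ℝ)⁻¹ := by
  have hxy : ∀ i ∈ s, 0 < (x + y) i := fun i hi ↦ add_pos (hx i hi) (hy i hi)
  have hj : ∀ j ∈ range l, k + j < #s := fun j hj ↦ by have := mem_range.1 hj; lia
  have rx_nonneg : ∀ j ∈ range l, 0 ≤ esymmRatio s (k + j) x :=
    fun j h ↦ (esymmRatio_pos (hj j h) hx).le
  have ry_nonneg : ∀ j ∈ range l, 0 ≤ esymmRatio s (k + j) y :=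
    fun j h ↦ (esymmRatio_pos (hj j h) hy).le
  have weights_sum : ∑ _j ∈ range l, (l : ℝ)⁻¹ = 1 := by simp [hl]
  rw [esymmOn_div_esymmOn_rpow_eq_prod hkl hx, esymmOn_div_esymmOn_rpow_eq_prod hkl hy,
    esymmOn_div_esymmOn_rpow_eq_prod hkl hxy]
  calc ∏ j ∈ range l, esymmRatio s (k + j) x ^ (l : ℝ)⁻¹ +
        ∏ j ∈ range l, esymmRatio s (k + j) y ^ (l : ℝ)⁻¹
      ≤ ∏ j ∈ range l, (esymmRatio s (k + j) x + esymmRatio s (k + j) y) ^ (l : ℝ)⁻¹ :=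
        prod_rpow_add_prod_rpow_le (fun _ _ ↦ by positivity) weights_sum rx_nonneg ry_nonneg
    _ ≤ ∏ j ∈ range l, esymmRatio s (k + j) (x + y) ^ (l : ℝ)⁻¹ := by
        refine prod_le_prod (fun j h ↦ ?_) fun j h ↦ ?_
        · exact Real.rpow_nonneg (add_nonneg (rx_nonneg j h) (ry_nonneg j h)) _
        · exact Real.rpow_le_rpow (add_nonneg (rx_nonneg j h) (ry_nonneg j h))
            (esymmRatio_add_le (hj j h) hx hy) (by positivity)

end RootRatio

theorem stmt7_general {ι : Type*} (s : Finset ι) {k l : ℕ} (hl : l ≠ 0) (hkl : k + l ≤ #s) :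
    ConcaveOn ℝ {x : ι → ℝ | ∀ i ∈ s, 0 < x i}
      (fun x ↦ (esymmOn s (k + l) x / esymmOn s k x) ^ (l : ℝ)⁻¹) :=
  concaveOn_of_map_smul_of_add_le_map_add (positiveOrthant s)
    (fun _ hc _ hx ↦ esymmOn_div_esymmOn_rpow_smul hc hl hkl hx)
    (fun _ hx _ hy ↦ esymmOn_div_esymmOn_rpow_add_le hl hkl hx hy)

theorem stmt7 (n l k : ℕ) (hn : 1 ≤ n) (hl : 1 ≤ l) (hln : l ≤ n) (hk : k ≤ n - l) :
    ConcaveOn ℝ {x : Fin n → ℝ | ∀ i, 0 < x i}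
      (fun x => (esymm n (k + l) x / esymm n k x) ^ ((l : ℝ)⁻¹)) := by
  have hkl : k + l ≤ #(univ : Finset (Fin n)) := by rw [card_fin]; lia
  simpa [esymm_eq_esymmOn_univ] using stmt7_general univ (Nat.one_le_iff_ne_zero.1 hl) hkl
end

section
/- Let n ≥ 1 and 0 ≤ k ≤ n. For every x ∈ ℝⁿ there exists μ ∈ ℝᵏ such that C(n-l, k-l)·σ_l(x) = C(n, k)·σ_l(μ) for every 0 ≤ l ≤ k, where the σ_l on the left are the elementary symmetric polynomials in n variables and on the right in k variables, and C(·,·) denotes the binomial coefficient. -/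
/-!
By Vieta's formula, `σ_l(x)` is the coefficient of `X ^ (n - l)` in `p = ∏ (X + x_i)`. The divided
derivative `q = p⁽ⁿ⁻ᵏ⁾ / (n - k)!` has degree `k`, leading coefficient `C(n, k)`, and
`C(n - l, k - l) σ_l(x)` as coefficient of `X ^ (k - l)`. By Rolle's theorem `q` splits over `ℝ`,
so `q = C(n, k) ∏ (X + μ_j)`, and a second application of Vieta's formula compares coefficients.
-/

open Polynomial

section RealRooted

variable {p : ℝ[X]}

-- Rolle's theorem: counted with multiplicity, differentiation loses at most one real root.
lemma splits_derivative (hp : p.Splits) : (derivative p).Splits := by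
  rw [splits_iff_card_roots] at hp ⊢
  have rolle := card_roots_le_derivative p
  have card_le := card_roots' (derivative p)
  have degree_le := natDegree_derivative_le p
  lia

lemma splits_iterate_derivative (hp : p.Splits) (m : ℕ) : (derivative^[m] p).Splits := by
  induction m with
  | zero => exact hp
  | succ m ih => exact Function.iterate_succ_apply' derivative m p ▸ splits_derivative ih

lemma splits_hasseDeriv (hp : p.Splits) (m : ℕ) : (hasseDeriv m p).Splits := by
  have hm : (m.factorial : ℝ) ≠ 0 := mod_cast m.factorial_ne_zero
  have h : hasseDeriv m p = C (m.factorial : ℝ)⁻¹ * derivative^[m] p := by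
    rw [← factorial_smul_hasseDeriv, LinearMap.smul_apply, ← Nat.cast_smul_eq_nsmul ℝ,
      ← smul_eq_C_mul, inv_smul_smul₀ hm]
  exact h ▸ (splits_iterate_derivative hp m).C_mul _

end RealRooted

section Vieta

variable {R : Type*} [CommSemiring R]

lemma monic_multiset_prod_X_add_C (s : Multiset R) : (s.map fun r ↦ X + C r).prod.Monic :=
  monic_multiset_prod_of_monic s _ fun r _ ↦ monic_X_add_C r

lemma natDegree_multiset_prod_X_add_C [Nontrivial R] (s : Multiset R) :
    (s.map fun r ↦ X + C r).prod.natDegree = s.card := by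
  rw [natDegree_multiset_prod_of_monic _ (by simp [monic_X_add_C])]
  simp

lemma exists_coeff_eq_leadingCoeff_mul_esymm {p : R[X]} (hp : p.Splits) :
    ∃ t : Multiset R, t.card = p.natDegree ∧
      ∀ l ≤ p.natDegree, p.coeff (p.natDegree - l) = p.leadingCoeff * t.esymm l := by
  obtain rfl | p_ne_zero := eq_or_ne p 0
  · exact ⟨0, by simp⟩
  nontriviality R
  obtain ⟨t, factorization⟩ := splits_iff_exists_multiset'.mp hp
  have card_t : t.card = p.natDegree := by
    rw [factorization, mul_comm, (monic_multiset_prod_X_add_C t).natDegree_mul' (by simpa),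
      natDegree_C, add_zero, natDegree_multiset_prod_X_add_C]
  refine ⟨t, card_t, fun l hl ↦ ?_⟩
  rw [← card_t] at hl ⊢
  conv_lhs => rw [factorization]
  rw [coeff_C_mul, Multiset.prod_X_add_C_coeff t (Nat.sub_le _ _), Nat.sub_sub_self hl]

lemma coeff_hasseDeriv_prod_X_add_C (s : Multiset R) {k l : ℕ} (hk : k ≤ s.card) (hl : l ≤ k) :
    (hasseDeriv (s.card - k) (s.map fun r ↦ X + C r).prod).coeff (k - l) =
      (s.card - l).choose (k - l) * s.esymm l := by
  have shift : k - l + (s.card - k) = s.card - l := by lia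
  rw [hasseDeriv_coeff, shift, Multiset.prod_X_add_C_coeff s (Nat.sub_le _ _),
    Nat.sub_sub_self (hl.trans hk), Nat.choose_symm_of_eq_add (b := k - l) (by lia)]

theorem exists_choose_mul_esymm_eq_of_splits_hasseDeriv [Nontrivial R] [IsAddTorsionFree R]
    {s : Multiset R} {k : ℕ} (hk : k ≤ s.card)
    (h : (hasseDeriv (s.card - k) (s.map fun r ↦ X + C r).prod).Splits) :
    ∃ t : Multiset R, t.card = k ∧ ∀ l ≤ k,
      (s.card - l).choose (k - l) * s.esymm l = s.card.choose k * t.esymm l := by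
  set q := hasseDeriv (s.card - k) (s.map fun r ↦ X + C r).prod
  have natDegree_q : q.natDegree = k := by
    rw [natDegree_hasseDeriv, natDegree_multiset_prod_X_add_C, Nat.sub_sub_self hk]
  have leadingCoeff_q : q.leadingCoeff = s.card.choose k := by
    rw [leadingCoeff, natDegree_q]
    simpa [Multiset.esymm] using coeff_hasseDeriv_prod_X_add_C s hk (Nat.zero_le k)
  obtain ⟨t, card_t, coeff_q⟩ := exists_coeff_eq_leadingCoeff_mul_esymm h
  rw [natDegree_q] at card_t coeff_q
  refine ⟨t, card_t, fun l hl ↦ ?_⟩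
  rw [← coeff_hasseDeriv_prod_X_add_C s hk hl, coeff_q l hl, leadingCoeff_q]

end Vieta

theorem exists_real_choose_mul_esymm_eq (s : Multiset ℝ) {k : ℕ} (hk : k ≤ s.card) :
    ∃ t : Multiset ℝ, t.card = k ∧ ∀ l ≤ k,
      (s.card - l).choose (k - l) * s.esymm l = s.card.choose k * t.esymm l := by
  have splits_prod : (s.map fun r ↦ X + C r).prod.Splits :=
    .multisetProd <| by simp [Splits.X_add_C]
  exact exists_choose_mul_esymm_eq_of_splits_hasseDeriv hk (splits_hasseDeriv splits_prod _)

lemma exists_fin_map_univ_eq {α : Type*} (s : Multiset α) :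
    ∃ f : Fin s.card → α, Finset.univ.val.map f = s := by
  obtain ⟨l, rfl⟩ : ∃ l : List α, (l : Multiset α) = s := ⟨s.toList, s.coe_toList⟩
  exact ⟨l.get, (Fin.univ_val_map l.get).trans (congrArg _ (List.ofFn_get l))⟩

lemma esymm_eq_multiset_esymm (n k : ℕ) (x : Fin n → ℝ) :
    esymm n k x = (Finset.univ.val.map x).esymm k :=
  (Finset.esymm_map_val x Finset.univ k).symm

theorem stmt16 (n k : ℕ) (hn : 1 ≤ n) (hk : k ≤ n) (x : Fin n → ℝ) :
    ∃ μ : Fin k → ℝ, ∀ l ≤ k,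
      (((n - l).choose (k - l) : ℝ)) * esymm n l x = ((n.choose k : ℝ)) * esymm k l μ := by
  have card_x : (Finset.univ.val.map x).card = n := by simp
  obtain ⟨t, rfl, ht⟩ :=
    exists_real_choose_mul_esymm_eq (Finset.univ.val.map x) (hk.trans_eq card_x.symm)
  obtain ⟨μ, hμ⟩ := exists_fin_map_univ_eq t
  refine ⟨μ, fun l hl ↦ ?_⟩
  rw [esymm_eq_multiset_esymm, esymm_eq_multiset_esymm, hμ]
  simpa only [card_x] using ht l hl
end

section
/- Let p ≥ 1 and μ, λ ∈ ℝᵖ. Set P = (X+μ₁)⋯(X+μ_p) and Q = (X+λ₁)⋯(X+λ_p) in ℝ[X]. Then Σ_{k=0}^{p} k!·(p-k)!·σ_k(μ + X·𝟙)·σ_{p-k}(λ + X·𝟙) = Σ_{k=0}^{p} P^{(p-k)}·Q^{(k)}, where P^{(j)} denotes the j-th derivative. Equivalently, p!·π_p(μ, λ) = Σ_{k=0}^{p} P^{(p-k)} Q^{(k)}, where π_p(μ, λ) = Σ_{k=0}^{p} σ_k(μ + X·𝟙)·σ_{p-k}(λ + X·𝟙)/C(p,k). -/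
open Polynomial

/-- The univariate polynomial `σ_k(x₁ + X, …, x_p + X)`. -/
noncomputable def esymmPoly (p k : ℕ) (x : Fin p → ℝ) : Polynomial ℝ :=
  ∑ s ∈ Finset.powersetCard k (Finset.univ : Finset (Fin p)), ∏ i ∈ s, (X + C (x i))

/-!
Expanding `P(X + Y) = ∏ (Y + (μᵢ + X))` in powers of `Y` in two ways, by Taylor's formula and by
Vieta's formula over `ℝ[X]`, gives `P⁽ʲ⁾ / j! = σ_{p-j}(μ + X·𝟙)`. Both identities then hold term
by term, the second because `p! / C(p,k) = k! (p-k)!`.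
-/

open scoped Nat

section Semiring

variable {R S : Type*} [Semiring R] [Semiring S]

theorem hasseDeriv_map (g : R →+* S) (k : ℕ) (f : R[X]) :
    hasseDeriv k (f.map g) = (hasseDeriv k f).map g := by
  ext n
  simp only [hasseDeriv_coeff, coeff_map, map_mul, map_natCast]

theorem taylor_X_map_C_coeff (f : R[X]) (k : ℕ) :
    (taylor X (f.map C)).coeff k = hasseDeriv k f := by
  rw [taylor_coeff, hasseDeriv_map, eval_map, eval₂_C_X]

end Semiring

section CommSemiring

variable {R : Type*} [CommSemiring R]

theorem taylor_X_map_C_prod_X_add_C (s : Multiset R) :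
    taylor X ((s.map fun r ↦ X + C r).prod.map C) =
      ((s.map fun r ↦ X + C r).map fun q ↦ (X + C q : R[X][X])).prod := by
  rw [taylor_apply, Polynomial.map_multiset_prod, multiset_prod_comp]
  simp only [Multiset.map_map, Function.comp_def, Polynomial.map_add, map_X, map_C, add_comp,
    X_comp, C_comp, C_add, add_assoc]

theorem hasseDeriv_prod_X_add_C {s : Multiset R} {k : ℕ} (hk : k ≤ s.card) :
    hasseDeriv k (s.map fun r ↦ X + C r).prod =
      (s.map fun r ↦ X + C r).esymm (s.card - k) := by
  rw [← taylor_X_map_C_coeff, taylor_X_map_C_prod_X_add_C,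
    Multiset.prod_X_add_C_coeff _ (by rwa [Multiset.card_map]), Multiset.card_map]

theorem iterate_derivative_prod_X_add_C {s : Multiset R} {k : ℕ} (hk : k ≤ s.card) :
    derivative^[k] (s.map fun r ↦ X + C r).prod =
      C (k ! : R) * (s.map fun r ↦ X + C r).esymm (s.card - k) := by
  rw [← factorial_smul_hasseDeriv, LinearMap.smul_apply, hasseDeriv_prod_X_add_C hk,
    nsmul_eq_mul, C_eq_natCast]

theorem factorial_mul_factorial_mul_esymm_mul_esymm {p k : ℕ} {s t : Multiset R}
    (hs : s.card = p) (ht : t.card = p) (hk : k ≤ p) :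
    C ((k ! : R) * ((p - k)! : R)) *
        ((s.map fun r ↦ X + C r).esymm k * (t.map fun r ↦ X + C r).esymm (p - k)) =
      derivative^[p - k] (s.map fun r ↦ X + C r).prod *
        derivative^[k] (t.map fun r ↦ X + C r).prod := by
  rw [iterate_derivative_prod_X_add_C (hs ▸ p.sub_le k),
    iterate_derivative_prod_X_add_C (ht ▸ hk), hs, ht, Nat.sub_sub_self hk, C_mul]
  ring

end CommSemiring

section Semifield

variable {K : Type*} [Semifield K]

theorem factorial_mul_inv_choose {p k : ℕ} (hp : (p ! : K) ≠ 0) (hk : k ≤ p) :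
    (p ! : K) * (p.choose k : K)⁻¹ = k ! * (p - k)! := by
  have hfact : (p ! : K) = p.choose k * (k ! * (p - k)!) := by
    rw [← Nat.choose_mul_factorial_mul_factorial hk, Nat.cast_mul, Nat.cast_mul, mul_assoc]
  have hchoose : (p.choose k : K) ≠ 0 := left_ne_zero_of_mul (hfact ▸ hp)
  rw [hfact, mul_comm, inv_mul_cancel_left₀ hchoose]

theorem stmt18_general {p : ℕ} (hp : (p ! : K) ≠ 0) {s t : Multiset K}
    (hs : s.card = p) (ht : t.card = p) :
    (∑ k ∈ Finset.range (p + 1), C ((k ! : K) * ((p - k)! : K)) *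
        ((s.map fun r ↦ X + C r).esymm k * (t.map fun r ↦ X + C r).esymm (p - k)) =
      ∑ k ∈ Finset.range (p + 1), derivative^[p - k] (s.map fun r ↦ X + C r).prod *
        derivative^[k] (t.map fun r ↦ X + C r).prod) ∧
    (C (p ! : K) * ∑ k ∈ Finset.range (p + 1), C (p.choose k : K)⁻¹ *
        ((s.map fun r ↦ X + C r).esymm k * (t.map fun r ↦ X + C r).esymm (p - k)) =
      ∑ k ∈ Finset.range (p + 1), derivative^[p - k] (s.map fun r ↦ X + C r).prod *
        derivative^[k] (t.map fun r ↦ X + C r).prod) := by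
  have hsum := Finset.sum_congr rfl fun k hk ↦
    factorial_mul_factorial_mul_esymm_mul_esymm hs ht (Finset.mem_range_succ_iff.mp hk)
  refine ⟨hsum, Eq.trans ?_ hsum⟩
  rw [Finset.mul_sum]
  refine Finset.sum_congr rfl fun k hk ↦ ?_
  rw [← mul_assoc, ← C_mul, factorial_mul_inv_choose hp (Finset.mem_range_succ_iff.mp hk)]

end Semifield

theorem esymmPoly_eq_esymm (p k : ℕ) (x : Fin p → ℝ) :
    esymmPoly p k x = ((Finset.univ.val.map x).map fun r ↦ X + C r).esymm k := by
  rw [Multiset.map_map, Finset.esymm_map_val]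
  rfl

theorem stmt18 (p : ℕ) (hp : 1 ≤ p) (μ lam : Fin p → ℝ)
    (P Q : Polynomial ℝ)
    (hP : P = ∏ i : Fin p, (X + C (μ i)))
    (hQ : Q = ∏ i : Fin p, (X + C (lam i))) :
    (∑ k ∈ Finset.range (p + 1),
        C ((k.factorial : ℝ) * ((p - k).factorial : ℝ))
          * (esymmPoly p k μ * esymmPoly p (p - k) lam)
      = ∑ k ∈ Finset.range (p + 1),
          Polynomial.derivative^[p - k] P * Polynomial.derivative^[k] Q)
    ∧ (C ((p.factorial : ℝ))
        * ∑ k ∈ Finset.range (p + 1),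
            C ((p.choose k : ℝ))⁻¹ * (esymmPoly p k μ * esymmPoly p (p - k) lam)
      = ∑ k ∈ Finset.range (p + 1),
          Polynomial.derivative^[p - k] P * Polynomial.derivative^[k] Q) := by
  subst hP hQ
  simpa only [esymmPoly_eq_esymm, Finset.prod_eq_multiset_prod, Multiset.map_map,
    Function.comp_def] using
    stmt18_general (s := Finset.univ.val.map μ) (t := Finset.univ.val.map lam)
      (Nat.cast_ne_zero.mpr p.factorial_ne_zero) (by simp) (by simp)
end
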